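/- arXiv:2405.06213 — 6 statements merged into one kernel-verified Lean document; each statement's English description precedes it below -/
import Mathlib

section
/- Let γ > 1 and B, S > 0 be real constants. Then 0 < ϱ_c < ϱ_m, the value of the squared momentum at the critical density satisfies 𝔱(ϱ_c) = 𝔱_c = (γ−1)·ϱ_c^{γ+1}·S, and for every ρ with 0 < ρ ≤ ϱ_m and ρ ≠ ϱ_c one has 𝔱(ρ) < 𝔱_c. In other words, on (0, ϱ_m] the function ρ ↦ 𝔱(ρ) attains its maximum 𝔱_c uniquely at ρ = ϱ_c. -/
/-- Let `γ > 1` and `B, S > 0`. With the squared momentum `𝔱 ρ = 2ρ²(B - ρ^(γ-1)S)`,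
the critical density `ϱ_c = (2B/((γ+1)S))^(1/(γ-1))`, the maximum density
`ϱ_m = (B/S)^(1/(γ-1))` and the squared critical momentum
`𝔱_c = (γ-1)(2B/(γ+1))^((γ+1)/(γ-1)) S^(-2/(γ-1))`, one has `0 < ϱ_c < ϱ_m`,
`𝔱(ϱ_c) = 𝔱_c = (γ-1)ϱ_c^(γ+1)S`, and `𝔱 ρ < 𝔱_c` for every `ρ ∈ (0, ϱ_m]` with `ρ ≠ ϱ_c`. -/
theorem stmt_0 (γ B S : ℝ) (hγ : 1 < γ) (hB : 0 < B) (hS : 0 < S) :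
    0 < (2 * B / ((γ + 1) * S)) ^ (1 / (γ - 1)) ∧
    (2 * B / ((γ + 1) * S)) ^ (1 / (γ - 1)) < (B / S) ^ (1 / (γ - 1)) ∧
    2 * ((2 * B / ((γ + 1) * S)) ^ (1 / (γ - 1))) ^ 2 *
        (B - ((2 * B / ((γ + 1) * S)) ^ (1 / (γ - 1))) ^ (γ - 1) * S) =
      (γ - 1) * (2 * B / (γ + 1)) ^ ((γ + 1) / (γ - 1)) * S ^ (-2 / (γ - 1)) ∧
    (γ - 1) * (2 * B / (γ + 1)) ^ ((γ + 1) / (γ - 1)) * S ^ (-2 / (γ - 1)) =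
      (γ - 1) * ((2 * B / ((γ + 1) * S)) ^ (1 / (γ - 1))) ^ (γ + 1) * S ∧
    ∀ ρ : ℝ, 0 < ρ → ρ ≤ (B / S) ^ (1 / (γ - 1)) →
      ρ ≠ (2 * B / ((γ + 1) * S)) ^ (1 / (γ - 1)) →
      2 * ρ ^ 2 * (B - ρ ^ (γ - 1) * S) <
        (γ - 1) * (2 * B / (γ + 1)) ^ ((γ + 1) / (γ - 1)) * S ^ (-2 / (γ - 1)) := by
  have hg : 0 < γ - 1 := by linarith
  have hg0 : γ - 1 ≠ 0 := hg.ne'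
  have hg1 : 0 < γ + 1 := by linarith
  have ha : 0 < 2 * B / (γ + 1) := by positivity
  have hb : 0 < 2 * B / ((γ + 1) * S) := by positivity
  have hx : 0 < (2 * B / ((γ + 1) * S)) ^ (1 / (γ - 1)) := Real.rpow_pos_of_pos hb _
  have hc : ((2 * B / ((γ + 1) * S)) ^ (1 / (γ - 1))) ^ (γ - 1) = 2 * B / ((γ + 1) * S) := by
    rw [← Real.rpow_mul hb.le, one_div_mul_cancel hg0, Real.rpow_one]
  have hlt : (2 * B / ((γ + 1) * S)) ^ (1 / (γ - 1)) < (B / S) ^ (1 / (γ - 1)) := by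
    apply Real.rpow_lt_rpow hb.le _ (by positivity)
    rw [div_lt_div_iff₀ (by positivity) hS]
    nlinarith [mul_pos (mul_pos hB hS) hg]
  have h4 : (γ - 1) * (2 * B / (γ + 1)) ^ ((γ + 1) / (γ - 1)) * S ^ (-2 / (γ - 1)) =
      (γ - 1) * ((2 * B / ((γ + 1) * S)) ^ (1 / (γ - 1))) ^ (γ + 1) * S := by
    have e1 : 1 / (γ - 1) * (γ + 1) = (γ + 1) / (γ - 1) := by ring
    have e2 : -2 / (γ - 1) = 1 - (γ + 1) / (γ - 1) := by
      field_simp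
      ring
    rw [← Real.rpow_mul hb.le, e1, e2, Real.rpow_sub hS, Real.rpow_one, ← div_div,
      Real.div_rpow ha.le hS.le]
    ring
  rw [h4]
  set x := (2 * B / ((γ + 1) * S)) ^ (1 / (γ - 1)) with hxdef
  have hp : x ^ (γ + 1) = x ^ 2 * x ^ (γ - 1) := by
    rw [← Real.rpow_natCast, ← Real.rpow_add hx]
    congr 1
    push_cast
    ring
  have hBc : B = (γ + 1) / 2 * S * x ^ (γ - 1) := by
    rw [hc]
    field_simp
  refine ⟨hx, hlt, ?_, rfl, ?_⟩
  · rw [hp]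
    linear_combination 2 * x ^ 2 * hBc
  · intro ρ hρ _ hne
    obtain ⟨s, rfl⟩ : ∃ s, ρ = x * s := ⟨ρ / x, by field_simp⟩
    have hs : 0 < s := pos_of_mul_pos_right hρ hx.le
    have hs1 : s ≠ 1 := by
      rintro rfl
      exact hne (mul_one x)
    have hs2 : s ^ 2 - 1 ≠ 0 := by
      intro h
      apply hs1
      nlinarith
    have key := one_add_mul_self_lt_rpow_one_add (s := s ^ 2 - 1) (by nlinarith [sq_nonneg s])
      hs2 (p := (γ + 1) / 2) (by linarith)
    have e : (1 + (s ^ 2 - 1)) ^ ((γ + 1) / 2) = s ^ 2 * s ^ (γ - 1) := by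
      rw [add_sub_cancel, ← Real.rpow_natCast, ← Real.rpow_mul hs.le, ← Real.rpow_add hs]
      congr 1
      push_cast
      ring
    rw [e] at key
    have hcpos : 0 < x ^ (γ - 1) := Real.rpow_pos_of_pos hx _
    have hK : 0 < 2 * x ^ 2 * x ^ (γ - 1) * S := by positivity
    have := mul_lt_mul_of_pos_left key hK
    rw [hp, Real.mul_rpow hx.le hs.le]
    have hb2 : 2 * (x * s) ^ 2 * B = 2 * (x * s) ^ 2 * ((γ + 1) / 2 * S * x ^ (γ - 1)) := by
      rw [← hBc]
    linarith
end

section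
/- Let γ > 1 and B, S > 0 be real constants. For every t with 0 ≤ t < 𝔱_c there exists a unique ρ in the subsonic density range (ϱ_c, ϱ_m] such that 𝔱(ρ) = t. (Consequently the subsonic density, and hence its reciprocal g := 1/ρ, is a well-defined function of t on [0, 𝔱_c), with 1/ϱ_m ≤ g < 1/ϱ_c.) -/
/-- Let `γ > 1` and `B, S > 0`. For every `t` with `0 ≤ t < 𝔱_c` there exists a unique
density `ρ` in the subsonic range `(ϱ_c, ϱ_m]` such that the squared momentum
`2ρ²(B - ρ^(γ-1)S)` equals `t`. -/
theorem stmt_3 (γ B S t : ℝ) (hγ : 1 < γ) (hB : 0 < B) (hS : 0 < S)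
    (ht0 : 0 ≤ t)
    (htc : t < (γ - 1) * (2 * B / (γ + 1)) ^ ((γ + 1) / (γ - 1)) * S ^ (-2 / (γ - 1))) :
    ∃! ρ : ℝ, ((2 * B / ((γ + 1) * S)) ^ (1 / (γ - 1)) < ρ ∧
        ρ ≤ (B / S) ^ (1 / (γ - 1))) ∧
      2 * ρ ^ 2 * (B - ρ ^ (γ - 1) * S) = t := by
  have hg : 0 < γ - 1 := by linarith
  have hg1 : 0 < γ + 1 := by linarith
  have hx : 0 < 2 * B / ((γ + 1) * S) := by positivity
  have hy : 0 < B / S := by positivity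
  have hxy : 2 * B / ((γ + 1) * S) < B / S := by
    rw [div_lt_div_iff₀ (by positivity) hS]
    have : 0 < B * S := by positivity
    nlinarith
  have hc0 : 0 < (2 * B / ((γ + 1) * S)) ^ (1 / (γ - 1)) := Real.rpow_pos_of_pos hx _
  have hcm : (2 * B / ((γ + 1) * S)) ^ (1 / (γ - 1)) < (B / S) ^ (1 / (γ - 1)) :=
    Real.rpow_lt_rpow hx.le hxy (by positivity)
  have hcp : ((2 * B / ((γ + 1) * S)) ^ (1 / (γ - 1))) ^ (γ - 1) = 2 * B / ((γ + 1) * S) := by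
    rw [← Real.rpow_mul hx.le, one_div_mul_cancel hg.ne', Real.rpow_one]
  have hmp : ((B / S) ^ (1 / (γ - 1))) ^ (γ - 1) = B / S := by
    rw [← Real.rpow_mul hy.le, one_div_mul_cancel hg.ne', Real.rpow_one]
  have htcv : (γ - 1) * (2 * B / (γ + 1)) ^ ((γ + 1) / (γ - 1)) * S ^ (-2 / (γ - 1)) =
      2 * ((2 * B / ((γ + 1) * S)) ^ (1 / (γ - 1))) ^ 2 *
        (B - ((2 * B / ((γ + 1) * S)) ^ (1 / (γ - 1))) ^ (γ - 1) * S) := by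
    rw [hcp]
    have ha : 0 < 2 * B / (γ + 1) := by positivity
    have e1 : (γ + 1) / (γ - 1) = 1 + 2 / (γ - 1) := by field_simp; ring
    have e2 : ((2 * B / ((γ + 1) * S)) ^ (1 / (γ - 1))) ^ 2 =
        (2 * B / (γ + 1)) ^ (2 / (γ - 1)) * S ^ (-2 / (γ - 1)) := by
      rw [← Real.rpow_natCast, ← Real.rpow_mul hx.le, ← div_div, Real.div_rpow ha.le hS.le,
        neg_div, Real.rpow_neg hS.le, div_eq_mul_inv]
      have : 1 / (γ - 1) * ((2 : ℕ) : ℝ) = 2 / (γ - 1) := by push_cast; ring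
      rw [this]
    rw [e1, Real.rpow_add ha, Real.rpow_one, e2]
    field_simp
    ring
  rw [htcv] at htc
  generalize (2 * B / ((γ + 1) * S)) ^ (1 / (γ - 1)) = c at *
  generalize (B / S) ^ (1 / (γ - 1)) = m at *
  have hcont : ContinuousOn (fun ρ : ℝ => 2 * ρ ^ 2 * (B - ρ ^ (γ - 1) * S)) (Set.Icc c m) := by
    have : Continuous (fun ρ : ℝ => ρ ^ (γ - 1)) := Real.continuous_rpow_const hg.le
    fun_prop
  have hanti : StrictAntiOn (fun ρ : ℝ => 2 * ρ ^ 2 * (B - ρ ^ (γ - 1) * S)) (Set.Icc c m) := by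
    apply strictAntiOn_of_deriv_neg (convex_Icc c m) hcont
    intro x hx'
    rw [interior_Icc] at hx'
    have hx0 : 0 < x := hc0.trans hx'.1
    have h1 := Real.hasDerivAt_rpow_const (x := x) (p := γ - 1) (Or.inl hx0.ne')
    have h2 := (((hasDerivAt_id x).pow 2).const_mul 2).mul ((h1.mul_const S).const_sub B)
    have h3 : HasDerivAt (fun ρ : ℝ => 2 * ρ ^ 2 * (B - ρ ^ (γ - 1) * S))
      (2 * x * (2 * B - (γ + 1) * S * x ^ (γ - 1))) x := by
      refine HasDerivAt.congr_deriv (f := fun ρ : ℝ => 2 * ρ ^ 2 * (B - ρ ^ (γ - 1) * S)) h2 ?_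
      rw [Real.rpow_sub_one hx0.ne' (γ - 1)]
      simp
      field_simp
      ring
    rw [h3.deriv]
    have h4 : c ^ (γ - 1) < x ^ (γ - 1) := Real.rpow_lt_rpow hc0.le hx'.1 hg
    rw [hcp, div_lt_iff₀ (by positivity)] at h4
    apply mul_neg_of_pos_of_neg (by positivity)
    nlinarith
  have hfm : 2 * m ^ 2 * (B - m ^ (γ - 1) * S) = 0 := by
    rw [hmp]; field_simp; ring
  obtain ⟨r, hr, hrt⟩ := intermediate_value_Icc' hcm.le hcont
    (show t ∈ Set.Icc _ _ from ⟨by simpa only [hfm] using ht0, htc.le⟩)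
  refine ⟨r, ⟨⟨lt_of_le_of_ne hr.1 ?_, hr.2⟩, hrt⟩, ?_⟩
  · rintro rfl
    exact htc.ne' hrt
  · rintro s ⟨⟨hs1, hs2⟩, hs3⟩
    exact hanti.injOn ⟨hs1.le, hs2⟩ hr (hs3.trans hrt.symm)
end

section
/- Let γ > 1 and B, S > 0 be real constants, and let ε > 0. If ρ satisfies ϱ_c < ρ ≤ ϱ_m and 𝔱(ρ) ≤ 𝔱_c − ε/2, then the derivative of the squared momentum satisfies 2ρ(2B − (γ+1)ρ^{γ−1}S) ≤ −ε/ρ. -/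
/-- Let `γ > 1`, `B, S > 0` and `ε > 0`. If `ϱ_c < ρ ≤ ϱ_m` and
`𝔱(ρ) = 2ρ²(B - ρ^(γ-1)S) ≤ 𝔱_c - ε/2`, then the derivative of the squared momentum
satisfies `2ρ(2B - (γ+1)ρ^(γ-1)S) ≤ -ε/ρ`. -/
theorem stmt_6 (γ B S ε ρ : ℝ) (hγ : 1 < γ) (hB : 0 < B) (hS : 0 < S) (hε : 0 < ε)
    (h1 : (2 * B / ((γ + 1) * S)) ^ (1 / (γ - 1)) < ρ)
    (h2 : ρ ≤ (B / S) ^ (1 / (γ - 1)))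
    (h3 : 2 * ρ ^ 2 * (B - ρ ^ (γ - 1) * S) ≤
      (γ - 1) * (2 * B / (γ + 1)) ^ ((γ + 1) / (γ - 1)) * S ^ (-2 / (γ - 1)) - ε / 2) :
    2 * ρ * (2 * B - (γ + 1) * ρ ^ (γ - 1) * S) ≤ -ε / ρ := by
  have hg : 0 < γ - 1 := by linarith
  have hg1 : 0 < γ + 1 := by linarith
  have hA : 0 < 2 * B / (γ + 1) := by positivity
  have hc : 0 < (2 * B / ((γ + 1) * S)) ^ (1 / (γ - 1)) := by positivity
  have hρ : 0 < ρ := hc.trans h1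
  have key : (2 * B / (γ + 1)) ^ ((γ + 1) / (γ - 1)) * S ^ (-2 / (γ - 1))
      = ((2 * B / ((γ + 1) * S)) ^ (1 / (γ - 1))) ^ (γ + 1) * S := by
    rw [← Real.rpow_mul (by positivity), ← div_div, Real.div_rpow hA.le hS.le,
      show 1 / (γ - 1) * (γ + 1) = (γ + 1) / (γ - 1) by ring,
      show -2 / (γ - 1) = 1 - (γ + 1) / (γ - 1) by field_simp; ring,
      Real.rpow_sub hS, Real.rpow_one]
    ring
  have hmono : ((2 * B / ((γ + 1) * S)) ^ (1 / (γ - 1))) ^ (γ + 1) ≤ ρ ^ (γ + 1) :=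
    Real.rpow_le_rpow hc.le h1.le hg1.le
  have hX : ρ ^ (γ + 1) = ρ ^ 2 * ρ ^ (γ - 1) := by
    rw [← Real.rpow_natCast, ← Real.rpow_add hρ]
    congr 1
    push_cast
    ring
  have hfin : (γ - 1) * (((2 * B / ((γ + 1) * S)) ^ (1 / (γ - 1))) ^ (γ + 1) * S)
      ≤ (γ - 1) * (ρ ^ 2 * ρ ^ (γ - 1) * S) := by
    rw [← hX]
    gcongr
  rw [mul_assoc (γ - 1), key] at h3
  rw [le_div_iff₀ hρ]
  linarith
end

section
/- Let γ > 1, B, S > 0 and ε > 0 be real constants. Let ρ : [0, 𝔱_c) → ℝ satisfy ϱ_c < ρ(t) ≤ ϱ_m and 𝔱(ρ(t)) = t for all t ∈ [0, 𝔱_c), and suppose ρ is differentiable at some t₀ with 0 ≤ t₀ ≤ 𝔱_c − ε/2 (derivative taken within [0, 𝔱_c)). Then the function g := 1/ρ is differentiable at t₀ with derivative g'(t₀) = −ρ'(t₀)/ρ(t₀)², and 0 < g'(t₀) ≤ g(t₀)/ε. -/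
/-- Let `γ > 1`, `B, S > 0`, `ε > 0`. Let `ρ : [0, 𝔱_c) → ℝ` take values in `(ϱ_c, ϱ_m]`
and satisfy `𝔱(ρ(t)) = t` on `[0, 𝔱_c)`. If `ρ` has derivative `ρ'` at `t₀` (within
`[0, 𝔱_c)`) with `0 ≤ t₀ ≤ 𝔱_c - ε/2`, then `g = 1/ρ` is differentiable at `t₀` with
derivative `-ρ'/ρ(t₀)²`, and `0 < -ρ'/ρ(t₀)² ≤ g(t₀)/ε`. -/
theorem stmt_7 (γ B S ε : ℝ) (hγ : 1 < γ) (hB : 0 < B) (hS : 0 < S) (hε : 0 < ε)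
    (ρ : ℝ → ℝ)
    (hmem : ∀ t ∈ Set.Ico (0 : ℝ)
        ((γ - 1) * (2 * B / (γ + 1)) ^ ((γ + 1) / (γ - 1)) * S ^ (-2 / (γ - 1))),
      (2 * B / ((γ + 1) * S)) ^ (1 / (γ - 1)) < ρ t ∧ ρ t ≤ (B / S) ^ (1 / (γ - 1)))
    (hrel : ∀ t ∈ Set.Ico (0 : ℝ)
        ((γ - 1) * (2 * B / (γ + 1)) ^ ((γ + 1) / (γ - 1)) * S ^ (-2 / (γ - 1))),
      2 * (ρ t) ^ 2 * (B - (ρ t) ^ (γ - 1) * S) = t)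
    (t₀ ρ' : ℝ) (ht₀ : 0 ≤ t₀)
    (ht₀' : t₀ ≤ (γ - 1) * (2 * B / (γ + 1)) ^ ((γ + 1) / (γ - 1)) * S ^ (-2 / (γ - 1))
      - ε / 2)
    (hd : HasDerivWithinAt ρ ρ'
      (Set.Ico (0 : ℝ)
        ((γ - 1) * (2 * B / (γ + 1)) ^ ((γ + 1) / (γ - 1)) * S ^ (-2 / (γ - 1)))) t₀) :
    HasDerivWithinAt (fun t => 1 / ρ t) (-ρ' / (ρ t₀) ^ 2)
      (Set.Ico (0 : ℝ)
        ((γ - 1) * (2 * B / (γ + 1)) ^ ((γ + 1) / (γ - 1)) * S ^ (-2 / (γ - 1)))) t₀ ∧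
    0 < -ρ' / (ρ t₀) ^ 2 ∧ -ρ' / (ρ t₀) ^ 2 ≤ (1 / ρ t₀) / ε := by
  have hg : 0 < γ - 1 := by linarith
  have hg1 : 0 < γ + 1 := by linarith
  set c := (2 * B / ((γ + 1) * S)) ^ (1 / (γ - 1)) with hc
  have hq : 0 < 2 * B / ((γ + 1) * S) := by positivity
  have hcpos : 0 < c := Real.rpow_pos_of_pos hq _
  have hcx : c ^ (γ - 1) = 2 * B / ((γ + 1) * S) := by
    rw [hc, ← Real.rpow_mul hq.le, one_div_mul_cancel hg.ne', Real.rpow_one]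
  have htc : (γ - 1) * (2 * B / (γ + 1)) ^ ((γ + 1) / (γ - 1)) * S ^ (-2 / (γ - 1))
      = (γ - 1) * S * c ^ (γ + 1) := by
    have h1 : c ^ (γ + 1) = (2 * B / (γ + 1)) ^ ((γ + 1) / (γ - 1))
        / S ^ ((γ + 1) / (γ - 1)) := by
      rw [hc, ← Real.rpow_mul hq.le, ← Real.div_rpow (by positivity) hS.le]
      congr 1
      · field_simp
      · field_simp
    have h2 : S ^ (-2 / (γ - 1)) = S / S ^ ((γ + 1) / (γ - 1)) := by
      have : -2 / (γ - 1) = 1 - (γ + 1) / (γ - 1) := by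
        field_simp
        ring
      rw [this, Real.rpow_sub hS, Real.rpow_one]
    rw [h1, h2]
    ring
  rw [htc] at hmem hrel ht₀' hd ⊢
  set T := (γ - 1) * S * c ^ (γ + 1) with hT
  have hmem0 : t₀ ∈ Set.Ico (0 : ℝ) T := ⟨ht₀, by linarith⟩
  obtain ⟨hlo, -⟩ := hmem t₀ hmem0
  have hr0 := hrel t₀ hmem0
  have hρ : 0 < ρ t₀ := hcpos.trans hlo
  have hx : 2 * B / ((γ + 1) * S) < ρ t₀ ^ (γ - 1) := by
    rw [← hcx]
    exact Real.rpow_lt_rpow hcpos.le hlo hg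
  rw [div_lt_iff₀ (by positivity)] at hx
  have hT' : T ≤ (γ - 1) * S * ((ρ t₀) ^ 2 * ρ t₀ ^ (γ - 1)) := by
    have h1 : (ρ t₀) ^ 2 * ρ t₀ ^ (γ - 1) = ρ t₀ ^ (γ + 1) := by
      rw [← Real.rpow_natCast, ← Real.rpow_add hρ]
      congr 1
      push_cast
      ring
    rw [h1, hT]
    have := Real.rpow_le_rpow hcpos.le hlo.le hg1.le
    gcongr
  have hder : HasDerivWithinAt (fun t => 2 * (ρ t) ^ 2 * (B - (ρ t) ^ (γ - 1) * S))
      (2 * (2 * ρ t₀ * ρ') * (B - (ρ t₀) ^ (γ - 1) * S) +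
        2 * (ρ t₀) ^ 2 * (-(ρ' * (γ - 1) * (ρ t₀) ^ (γ - 1 - 1) * S))) (Set.Ico 0 T) t₀ := by
    have h1 := (hd.fun_pow 2).const_mul 2
    have h2 := ((hd.rpow_const (p := γ - 1) (Or.inl hρ.ne')).mul_const S).const_sub B
    refine (h1.fun_mul h2).congr_deriv ?_
    simp
  have hid : HasDerivWithinAt (fun t => 2 * (ρ t) ^ 2 * (B - (ρ t) ^ (γ - 1) * S))
      1 (Set.Ico 0 T) t₀ :=
    (hasDerivWithinAt_id t₀ _).congr (fun t ht => hrel t ht) hr0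
  have heq := ((uniqueDiffOn_Ico 0 T) t₀ hmem0).eq_deriv _ hder hid
  rw [Real.rpow_sub_one hρ.ne' (γ - 1)] at heq
  set r := ρ t₀ with hr
  set x := r ^ (γ - 1) with hxdef
  set D := 2 * r ^ 2 * ((γ + 1) * S * x - 2 * B) with hD
  have hDpos : 0 < D := by
    have : 0 < (γ + 1) * S * x - 2 * B := by linarith
    positivity
  have hDε : ε ≤ D := by
    have : D = 2 * ((γ - 1) * S * (r ^ 2 * x)) - 2 * t₀ := by
      rw [hD, ← hr0]; ring
    linarith
  have hval : -ρ' / r ^ 2 = 1 / r / D := by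
    have h : -ρ' * D = r := by
      field_simp at heq
      rw [hD]
      linear_combination r * heq
    field_simp
    linarith
  refine ⟨?_, ?_, ?_⟩
  · simpa [one_div] using hd.fun_inv hρ.ne'
  · rw [hval]; positivity
  · rw [hval]
    gcongr
end

section
/- Let γ > 1, B > 0, S > 0 be real constants and set D := B·S^{−1/γ}. Define the momentum function M(p) := (γp/((γ−1)S))^{1/γ} · √(2·S^{1/γ}·(D − (γp/(γ−1))^{(γ−1)/γ})) for p > 0. Then M is strictly antitone (strictly decreasing) on the closed interval [p_c(D), p^*(D)]. -/
lemma aux_anti (k D : ℝ) (hk : 0 < k) (hD : 0 < D) :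
    StrictAntiOn (fun t : ℝ => t ^ k * (D - t)) (Set.Icc (k * D / (k + 1)) D) := by
  have hpos : 0 < k * D / (k + 1) := by positivity
  apply strictAntiOn_of_deriv_neg (convex_Icc _ _)
  · apply ContinuousOn.mul
    · intro t ht
      exact (Real.continuousAt_rpow_const t k (Or.inr hk.le)).continuousWithinAt
    · fun_prop
  · intro t ht
    rw [interior_Icc] at ht
    have ht0 : 0 < t := hpos.trans ht.1
    have h1 : HasDerivAt (fun t : ℝ => t ^ k * (D - t))
        ((k * t ^ (k - 1)) * (D - t) + t ^ k * (-1)) t :=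
      (Real.hasDerivAt_rpow_const (Or.inl ht0.ne')).mul ((hasDerivAt_id t).const_sub D)
    rw [h1.deriv]
    have h2 : t ^ k = t ^ (k - 1) * t := by
      rw [← Real.rpow_add_one ht0.ne']; congr 1; ring
    have h3 : k * D < t * (k + 1) := (div_lt_iff₀ (by positivity)).1 ht.1
    have h4 : 0 < t ^ (k - 1) := Real.rpow_pos_of_pos ht0 _
    rw [h2]
    nlinarith [mul_pos h4 (sub_pos.2 h3)]

/-- Let `γ > 1`, `B, S > 0` and `D = B·S^(-1/γ)`. The momentum function
`M(p) = (γp/((γ-1)S))^(1/γ) · √(2S^(1/γ)(D - (γp/(γ-1))^((γ-1)/γ)))` is strictly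
antitone on the subsonic pressure interval `[p_c(D), p^*(D)]`, where
`p_c(D) = ((γ-1)/γ)(2D/(γ+1))^(γ/(γ-1))` and `p^*(D) = ((γ-1)/γ)D^(γ/(γ-1))`. -/
theorem stmt_11 (γ B S : ℝ) (hγ : 1 < γ) (hB : 0 < B) (hS : 0 < S) :
    StrictAntiOn
      (fun p : ℝ => (γ * p / ((γ - 1) * S)) ^ (1 / γ) *
        Real.sqrt (2 * S ^ (1 / γ) *
          (B * S ^ (-1 / γ) - (γ * p / (γ - 1)) ^ ((γ - 1) / γ))))
      (Set.Icc (((γ - 1) / γ) * (2 * (B * S ^ (-1 / γ)) / (γ + 1)) ^ (γ / (γ - 1)))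
        (((γ - 1) / γ) * (B * S ^ (-1 / γ)) ^ (γ / (γ - 1)))) := by
  have hD : 0 < B * S ^ (-1 / γ) := by positivity
  generalize B * S ^ (-1 / γ) = D at hD
  have hg : 0 < γ - 1 := by linarith
  have hg0 : 0 < γ := by linarith
  have hσ : 0 < S ^ (1 / γ) := by positivity
  have hlow : 0 < ((γ - 1) / γ) * (2 * D / (γ + 1)) ^ (γ / (γ - 1)) := by positivity
  have he : 0 < (γ - 1) / γ := by positivity
  have hk : 0 < 2 / (γ - 1) := by positivity
  have hinv : ∀ x : ℝ, 0 < x → (x ^ (γ / (γ - 1))) ^ ((γ - 1) / γ) = x := by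
    intro x hx
    rw [← Real.rpow_mul hx.le]
    have : γ / (γ - 1) * ((γ - 1) / γ) = 1 := by field_simp
    rw [this, Real.rpow_one]
  have hkD : 2 / (γ - 1) * D / (2 / (γ - 1) + 1) = 2 * D / (γ + 1) := by
    have : 2 / (γ - 1) + 1 = (γ + 1) / (γ - 1) := by field_simp; ring
    rw [this]; field_simp
  -- rewriting of the function
  have key : ∀ p : ℝ, 0 < p → (γ * p / ((γ - 1) * S)) ^ (1 / γ) *
        Real.sqrt (2 * S ^ (1 / γ) * (D - (γ * p / (γ - 1)) ^ ((γ - 1) / γ))) =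
      (Real.sqrt (2 * S ^ (1 / γ)) / S ^ (1 / γ)) *
        Real.sqrt (((γ * p / (γ - 1)) ^ ((γ - 1) / γ)) ^ (2 / (γ - 1)) *
          (D - (γ * p / (γ - 1)) ^ ((γ - 1) / γ))) := by
    intro p hp
    have hq : 0 < γ * p / (γ - 1) := by positivity
    have e1 : γ * p / ((γ - 1) * S) = (γ * p / (γ - 1)) / S := by field_simp
    rw [e1]
    generalize γ * p / (γ - 1) = q at hq
    have e2 : (q ^ ((γ - 1) / γ)) ^ (2 / (γ - 1)) = (q ^ (1 / γ)) ^ 2 := by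
      rw [← Real.rpow_mul hq.le, ← Real.rpow_natCast, ← Real.rpow_mul hq.le]
      congr 1; push_cast; field_simp
    rw [e2, Real.div_rpow hq.le hS.le, Real.sqrt_mul (by positivity) (D - _),
      Real.sqrt_mul (by positivity) (D - _), Real.sqrt_sq (by positivity)]
    ring
  have hmem : ∀ p : ℝ, p ∈ (Set.Icc (((γ - 1) / γ) * (2 * D / (γ + 1)) ^ (γ / (γ - 1)))
        (((γ - 1) / γ) * D ^ (γ / (γ - 1)))) →
      (γ * p / (γ - 1)) ^ ((γ - 1) / γ) ∈
        Set.Icc (2 / (γ - 1) * D / (2 / (γ - 1) + 1)) D := by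
    intro p hp
    have hp0 : 0 < p := hlow.trans_le hp.1
    rw [hkD]
    have r : ∀ y : ℝ, γ * ((γ - 1) / γ * y) / (γ - 1) = y := by
      intro y; field_simp
    constructor
    · rw [← hinv (2 * D / (γ + 1)) (by positivity)]
      apply Real.rpow_le_rpow (by positivity) _ he.le
      rw [← r ((2 * D / (γ + 1)) ^ (γ / (γ - 1)))]
      have := hp.1
      gcongr
    · conv_rhs => rw [← hinv D hD]
      apply Real.rpow_le_rpow (by positivity) _ he.le
      rw [← r (D ^ (γ / (γ - 1)))]
      have := hp.2
      gcongr
  intro a ha b hb hab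
  have ha0 : 0 < a := hlow.trans_le ha.1
  have hb0 : 0 < b := hlow.trans_le hb.1
  simp only []
  rw [key a ha0, key b hb0]
  have hlt : (γ * a / (γ - 1)) ^ ((γ - 1) / γ) < (γ * b / (γ - 1)) ^ ((γ - 1) / γ) := by
    apply Real.rpow_lt_rpow (by positivity) _ he
    gcongr
  have h := aux_anti (2 / (γ - 1)) D hk hD (hmem a ha) (hmem b hb) hlt
  apply mul_lt_mul_of_pos_left _ (by positivity)
  apply Real.sqrt_lt_sqrt _ h
  exact mul_nonneg (by positivity) (sub_nonneg.2 (hmem b hb).2)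
end

section
/- Let σ > 0, M ≥ 1 and 0 < 𝔟_* ≤ 𝔟^* be real constants, and define P(x,y) := σ·(y² + y³ − (8/M²)·x²·y²). Then P has partial derivatives ∂ₓP = −(16σ/M²)·x·y², ∂ᵧP = σ·(2y + 3y² − (16/M²)·x²·y), ∂ₓₓP = −(16σ/M²)·y², ∂ₓᵧP = −(32σ/M²)·x·y, ∂ᵧᵧP = σ·(2 + 6y − (16/M²)·x²). Moreover, if a₁₁, a₁₂, a₂₂ are real numbers with 𝔟_* ≤ a₁₁ ≤ 𝔟^*, 𝔟_* ≤ a₂₂ ≤ 𝔟^*, |a₁₂| ≤ 𝔟^*, and if M ≥ 40·𝔟^*/𝔟_*, then for all (x,y) with |x| ≤ M/2 and 0 < y ≤ 1/2, a₁₁·∂ₓₓP + 2a₁₂·∂ₓᵧP + a₂₂·∂ᵧᵧP − (a₁₂·∂ₓP + a₂₂·∂ᵧP)/y = −(16σ/M²)·a₁₁·y² − (48σ/M²)·a₁₂·x·y + 3σ·a₂₂·y ≥ 2σ·𝔟_*·y. -/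
/-- Barrier function near the symmetry axis: for
`P(x,y) = σ(y² + y³ - (8/M²)x²y²)` the stated partial derivatives hold, and if the
coefficients `a₁₁, a₁₂, a₂₂` are uniformly elliptic with bounds `𝔟_* ≤ a₁₁, a₂₂ ≤ 𝔟^*`,
`|a₁₂| ≤ 𝔟^*` and `M ≥ 40𝔟^*/𝔟_*`, then on `|x| ≤ M/2`, `0 < y ≤ 1/2` the operator
`a_{ij}∂_{ij}P - (a_{i2}/y)∂_iP` equals
`-(16σ/M²)a₁₁y² - (48σ/M²)a₁₂xy + 3σa₂₂y` and is at least `2σ𝔟_*y`. -/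
theorem stmt_18 (σ M bs bt : ℝ) (hσ : 0 < σ) (hM : 1 ≤ M)
    (hbs : 0 < bs) (hbst : bs ≤ bt) :
    (∀ x y : ℝ, HasDerivAt (fun x : ℝ => σ * (y ^ 2 + y ^ 3 - 8 / M ^ 2 * x ^ 2 * y ^ 2))
      (-(16 * σ / M ^ 2) * x * y ^ 2) x) ∧
    (∀ x y : ℝ, HasDerivAt (fun y : ℝ => σ * (y ^ 2 + y ^ 3 - 8 / M ^ 2 * x ^ 2 * y ^ 2))
      (σ * (2 * y + 3 * y ^ 2 - 16 / M ^ 2 * x ^ 2 * y)) y) ∧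
    (∀ x y : ℝ, HasDerivAt (fun x : ℝ => -(16 * σ / M ^ 2) * x * y ^ 2)
      (-(16 * σ / M ^ 2) * y ^ 2) x) ∧
    (∀ x y : ℝ, HasDerivAt (fun y : ℝ => -(16 * σ / M ^ 2) * x * y ^ 2)
      (-(32 * σ / M ^ 2) * x * y) y) ∧
    (∀ x y : ℝ, HasDerivAt (fun y : ℝ => σ * (2 * y + 3 * y ^ 2 - 16 / M ^ 2 * x ^ 2 * y))
      (σ * (2 + 6 * y - 16 / M ^ 2 * x ^ 2)) y) ∧
    (∀ a11 a12 a22 : ℝ, bs ≤ a11 → a11 ≤ bt → bs ≤ a22 → a22 ≤ bt → |a12| ≤ bt →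
      40 * bt / bs ≤ M →
      ∀ x y : ℝ, |x| ≤ M / 2 → 0 < y → y ≤ 1 / 2 →
        (a11 * (-(16 * σ / M ^ 2) * y ^ 2) + 2 * a12 * (-(32 * σ / M ^ 2) * x * y) +
            a22 * (σ * (2 + 6 * y - 16 / M ^ 2 * x ^ 2)) -
            (a12 * (-(16 * σ / M ^ 2) * x * y ^ 2) +
              a22 * (σ * (2 * y + 3 * y ^ 2 - 16 / M ^ 2 * x ^ 2 * y))) / y =
          -(16 * σ / M ^ 2) * a11 * y ^ 2 - 48 * σ / M ^ 2 * a12 * x * y +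
            3 * σ * a22 * y) ∧
        2 * σ * bs * y ≤
          -(16 * σ / M ^ 2) * a11 * y ^ 2 - 48 * σ / M ^ 2 * a12 * x * y +
            3 * σ * a22 * y) := by
  have hM0 : M ≠ 0 := by positivity
  refine ⟨?_, ?_, ?_, ?_, ?_, ?_⟩
  · intro x y
    have h := ((((hasDerivAt_pow 2 x).const_mul (8 / M ^ 2)).mul_const (y ^ 2)).const_sub
      (y ^ 2 + y ^ 3)).const_mul σ
    refine h.congr_deriv ?_
    push_cast
    ring
  · intro x y
    have h := (((hasDerivAt_pow 2 y).add (hasDerivAt_pow 3 y)).sub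
      ((hasDerivAt_pow 2 y).const_mul (8 / M ^ 2 * x ^ 2))).const_mul σ
    refine h.congr_deriv ?_
    push_cast
    ring
  · intro x y
    have h := ((hasDerivAt_id x).const_mul (-(16 * σ / M ^ 2))).mul_const (y ^ 2)
    refine h.congr_deriv ?_
    ring
  · intro x y
    have h := (hasDerivAt_pow 2 y).const_mul (-(16 * σ / M ^ 2) * x)
    refine h.congr_deriv ?_
    push_cast
    ring
  · intro x y
    have h := ((((hasDerivAt_id y).const_mul 2).add ((hasDerivAt_pow 2 y).const_mul 3)).sub
      ((hasDerivAt_id y).const_mul (16 / M ^ 2 * x ^ 2))).const_mul σ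
    refine h.congr_deriv ?_
    push_cast
    ring
  · intro a11 a12 a22 h1 h2 h3 h4 h5 h6 x y hx hy hy2
    refine ⟨by field_simp; ring, ?_⟩
    have hbt : 0 < bt := lt_of_lt_of_le hbs hbst
    have hMpos : 0 < M := by linarith
    have k1 : 40 * bt ≤ M * bs := (div_le_iff₀ hbs).1 h6
    have k2 : a11 * y ≤ bt * (1 / 2) := mul_le_mul h2 hy2 hy.le hbt.le
    have k3 : a12 * x ≤ bt * (M / 2) := by
      refine (le_abs_self _).trans ?_
      rw [abs_mul]
      exact mul_le_mul h5 hx (abs_nonneg _) hbt.le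
    have k4 : bt ≤ bt * M := le_mul_of_one_le_right hbt.le hM
    have k5 : 40 * bt * M ≤ M * bs * M := mul_le_mul_of_nonneg_right k1 hMpos.le
    have k6 : (16 * (a11 * y) + 48 * (a12 * x)) / M ^ 2 ≤ bs := by
      rw [div_le_iff₀ (by positivity)]
      nlinarith [mul_pos hbt hMpos]
    have k7 : 0 ≤ σ * y * (3 * a22 - 2 * bs - (16 * (a11 * y) + 48 * (a12 * x)) / M ^ 2) :=
      mul_nonneg (by positivity) (by linarith)
    have k8 : -(16 * σ / M ^ 2) * a11 * y ^ 2 - 48 * σ / M ^ 2 * a12 * x * y +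
        3 * σ * a22 * y - 2 * σ * bs * y =
        σ * y * (3 * a22 - 2 * bs - (16 * (a11 * y) + 48 * (a12 * x)) / M ^ 2) := by
      ring
    linarith
end
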